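/- arXiv:2102.04338 — 2 statements merged into one kernel-verified Lean document; each statement's English description precedes it below -/
import Mathlib

section
/- Assume the width condition min(d_0, d_1, …, d_{H+1}) = min(d_0, d_{H+1}). Then every local minimum of L is a global minimum of L. -/
attribute [local instance] Matrix.frobeniusNormedAddCommGroup Matrix.frobeniusNormedSpace

/-- The chained product `W_{j} ⋯ W_1` of the first `j` weight matrices. -/
noncomputable def netProdUpTo {H : ℕ} {d : Fin (H + 2) → ℕ}
    (W : ∀ i : Fin (H + 1), Matrix (Fin (d i.succ)) (Fin (d i.castSucc)) ℝ)
    (j : Fin (H + 2)) : Matrix (Fin (d j)) (Fin (d 0)) ℝ :=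
  Fin.induction (motive := fun j => Matrix (Fin (d j)) (Fin (d 0)) ℝ)
    1 (fun i acc => W i * acc) j

/-- The full chained product `W_{H+1} W_H ⋯ W_1`. -/
noncomputable def netProd {H : ℕ} {d : Fin (H + 2) → ℕ}
    (W : ∀ i : Fin (H + 1), Matrix (Fin (d i.succ)) (Fin (d i.castSucc)) ℝ) :
    Matrix (Fin (d (Fin.last (H + 1)))) (Fin (d 0)) ℝ :=
  netProdUpTo W (Fin.last (H + 1))

/-- The squared-error loss `L(W) = ½‖W_{H+1}⋯W_1 X − Y‖_F²`. -/
noncomputable def netLoss {H m : ℕ} {d : Fin (H + 2) → ℕ}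
    (X : Matrix (Fin (d 0)) (Fin m) ℝ)
    (Y : Matrix (Fin (d (Fin.last (H + 1)))) (Fin m) ℝ)
    (W : ∀ i : Fin (H + 1), Matrix (Fin (d i.succ)) (Fin (d i.castSucc)) ℝ) : ℝ :=
  (1 / 2) * ∑ a, ∑ b, ((netProd W * X - Y) a b) ^ 2

/-!
The loss is a convex differentiable function `f` of the product `A = W_{H+1} ⋯ W_1`, so it
suffices that the gradient `K` of `f` vanishes at `A`. Varying only the layer `k` at a local
minimum gives `P_k K S_{k+1} = 0`, where `P_k` is the product of the layers before it and
`S_{k+1}` that of the layers after it.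

Suppose `d_0` is the smallest width. Then `K S_{k+1} = 0` follows for all `k` by induction. If
`P_k` has a left inverse, cancel it. Otherwise `u P_k = 0` for some row vector `u ≠ 0`, as
`d_0 ≤ d_k`, and adding a small rank-one matrix `t v u` to the layer `k` does not change `A`, so
the perturbed network is again a local minimum, with the same `K`. Comparing `K S_k = 0` before
and after the perturbation yields `K S_{k+1} v u = 0` for every `v`, hence `K S_{k+1} = 0`. For
the last layer this says `K = 0`. The case where `d_{H+1}` is the smallest width is dual.
-/

open Matrix Topology

section RankAlternatives

variable {m n 𝕜 : Type*} [Fintype m] [Fintype n] [Field 𝕜]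

lemma exists_mul_eq_one_or_exists_vecMul_eq_zero [DecidableEq n]
    (hcard : Fintype.card n ≤ Fintype.card m) (A : Matrix m n 𝕜) :
    (∃ B : Matrix n m 𝕜, B * A = 1) ∨ ∃ u ≠ 0, u ᵥ* A = 0 := by
  by_cases hinj : Function.Injective A.vecMulLinear
  · have hcard_eq : Fintype.card m = Fintype.card n :=
      (card_le_of_injective 𝕜 A.vecMulLinear hinj).antisymm hcard
    have hsurj : Function.Surjective A.vecMulLinear :=
      (LinearMap.injective_iff_surjective_of_finrank_eq_finrank (by simpa using hcard_eq)).mp hinj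
    exact .inl (vecMul_surjective_iff_exists_left_inverse.mp hsurj)
  · rw [injective_iff_map_eq_zero] at hinj
    push Not at hinj
    obtain ⟨u, huA, hu⟩ := hinj
    exact .inr ⟨u, hu, huA⟩

lemma exists_mul_eq_one_or_exists_mulVec_eq_zero [DecidableEq m]
    (hcard : Fintype.card m ≤ Fintype.card n) (A : Matrix m n 𝕜) :
    (∃ B : Matrix n m 𝕜, A * B = 1) ∨ ∃ u ≠ 0, A *ᵥ u = 0 := by
  obtain ⟨B, hB⟩ | ⟨u, hu, huA⟩ := exists_mul_eq_one_or_exists_vecMul_eq_zero hcard Aᵀ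
  · exact .inl ⟨Bᵀ, by rw [← transpose_inj, transpose_mul, transpose_transpose, hB, transpose_one]⟩
  · exact .inr ⟨u, hu, by rwa [vecMul_transpose] at huA⟩

end RankAlternatives

section RankOneTests

variable {l m n R : Type*} [Fintype m] [CommSemiring R] [NoZeroDivisors R] {u : n → R}

lemma eq_zero_of_forall_mul_vecMulVec_eq_zero {L : Matrix l m R} (hu : u ≠ 0)
    (h : ∀ v : m → R, L * vecMulVec v u = 0) : L = 0 := by
  obtain ⟨c, hc⟩ := Function.ne_iff.mp hu
  refine ext_iff_mulVec.mpr fun v => funext fun r => ?_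
  have hrc : (L *ᵥ v) r * u c = 0 := by
    rw [← vecMulVec_apply, ← mul_vecMulVec, h, Matrix.zero_apply]
  rw [zero_mulVec]
  exact (mul_eq_zero.mp hrc).resolve_right hc

lemma eq_zero_of_forall_vecMulVec_mul_eq_zero {L : Matrix m l R} (hu : u ≠ 0)
    (h : ∀ v : m → R, vecMulVec u v * L = 0) : L = 0 := by
  refine transpose_eq_zero.mp (eq_zero_of_forall_mul_vecMulVec_eq_zero hu fun v => ?_)
  rw [← transpose_vecMulVec, ← transpose_mul, h, transpose_zero]

end RankOneTests

lemma exists_ne_isLocalMin_of_comp_eq_const {T E β : Type*} [TopologicalSpace T]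
    [TopologicalSpace E] [Preorder β] {F : E → β} {γ : T → E} {a : T} [(𝓝[≠] a).NeBot]
    (hγ : ContinuousAt γ a) (hmin : IsLocalMin F (γ a)) (hconst : ∀ t, F (γ t) = F (γ a)) :
    ∃ t ≠ a, IsLocalMin F (γ t) := by
  have hmin_near : ∀ᶠ t in 𝓝 a, IsLocalMin F (γ t) :=
    (hγ.eventually (eventually_eventually_nhds.mpr hmin)).mono fun t ht =>
      ht.mono fun _ hb => (hconst t).trans_le hb
  exact ((eventually_mem_nhdsWithin (s := {a}ᶜ)).and
    (hmin_near.filter_mono nhdsWithin_le_nhds)).exists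

section Convexity

lemma convexOn_finset_sum {𝕜 E β ι : Type*} [Semiring 𝕜] [PartialOrder 𝕜] [AddCommMonoid E]
    [Module 𝕜 E] [AddCommMonoid β] [PartialOrder β] [IsOrderedAddMonoid β] [Module 𝕜 β]
    {s : Set E} (hs : Convex 𝕜 s) {t : Finset ι} {f : ι → E → β}
    (hf : ∀ i ∈ t, ConvexOn 𝕜 s (f i)) : ConvexOn 𝕜 s (fun x => ∑ i ∈ t, f i x) := by
  rw [← Finset.sum_fn]
  exact Finset.sum_induction f (ConvexOn 𝕜 s) (fun _ _ => ConvexOn.add) (convexOn_const 0 hs) hf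

lemma isMinOn_univ_of_convexOn_of_hasFDerivAt_zero {E : Type*} [NormedAddCommGroup E]
    [NormedSpace ℝ E] {f : E → ℝ} {a : E} (hconv : ConvexOn ℝ Set.univ f)
    (hderiv : HasFDerivAt f (0 : E →L[ℝ] ℝ) a) : IsMinOn f Set.univ a := by
  intro b _
  let line : ℝ →ᵃ[ℝ] E := AffineMap.lineMap a b
  have hconv_line : ConvexOn ℝ Set.univ (f ∘ line) := hconv.comp_affineMap line
  have hderiv_line : HasDerivAt (f ∘ line) 0 0 := by
    have hderiv_start : HasFDerivAt f (0 : E →L[ℝ] ℝ) (line 0) := by simpa [line] using hderiv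
    simpa using hderiv_start.comp_hasDerivAt 0 line.hasDerivAt
  have hmin_line : IsMinOn (f ∘ line) Set.univ 0 :=
    hconv_line.isMinOn_of_rightDeriv_eq_zero (by simp)
      (hderiv_line.hasDerivWithinAt.derivWithin (uniqueDiffWithinAt_Ioi 0))
  simpa [line] using hmin_line (Set.mem_univ 1)

end Convexity

section TraceGradient

variable {m n : Type*} [Fintype m] [Fintype n]

lemma exists_eq_traceLinearMap_comp_mulLeftLinearMap {R : Type*} [CommSemiring R]
    (φ : Matrix m n R →ₗ[R] R) :
    ∃ K : Matrix n m R, φ = traceLinearMap n R R ∘ₗ mulLeftLinearMap n R K := by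
  classical
  refine ⟨of fun j i => φ (single i j 1), ext_linearMap R fun i j => ?_⟩
  ext
  simp [trace_mul_single]

/-- `K` is the transposed gradient of `f` at `A` for the Frobenius inner product, that is,
`f (A + M) = f A + tr (K M) + o(M)`. The transpose makes `K` compose with the layers of a network
whose product is `A`. -/
def HasTraceGradientAt (f : Matrix m n ℝ → ℝ) (K : Matrix n m ℝ) (A : Matrix m n ℝ) : Prop :=
  HasFDerivAt f (LinearMap.toContinuousLinearMap
    (traceLinearMap n ℝ ℝ ∘ₗ mulLeftLinearMap n ℝ K)) A

lemma exists_hasTraceGradientAt {f : Matrix m n ℝ → ℝ} {A : Matrix m n ℝ}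
    (hf : DifferentiableAt ℝ f A) : ∃ K, HasTraceGradientAt f K A := by
  obtain ⟨K, hK⟩ :=
    exists_eq_traceLinearMap_comp_mulLeftLinearMap (fderiv ℝ f A : Matrix m n ℝ →ₗ[ℝ] ℝ)
  refine ⟨K, ?_⟩
  rw [HasTraceGradientAt, ← hK]
  exact hf.hasFDerivAt

lemma hasTraceGradientAt_zero_iff {f : Matrix m n ℝ → ℝ} {A : Matrix m n ℝ} :
    HasTraceGradientAt f 0 A ↔ HasFDerivAt f (0 : Matrix m n ℝ →L[ℝ] ℝ) A := by
  simp [HasTraceGradientAt]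

lemma hasDerivAt_line_of_hasTraceGradientAt {f : Matrix m n ℝ → ℝ} {K : Matrix n m ℝ}
    {A : Matrix m n ℝ} (hf : HasTraceGradientAt f K A) (M : Matrix m n ℝ) :
    HasDerivAt (fun t : ℝ => f (A + t • M)) (K * M).trace 0 :=
  HasFDerivAt.hasLineDerivAt hf M

end TraceGradient

section SquareLoss

variable {m n p : Type*} [Fintype m] [Fintype n] [Fintype p]

/-- The squared-error loss as a function of the end-to-end matrix alone, so that
`netLoss X Y = squareLoss X Y ∘ netProd`. -/
noncomputable def squareLoss (X : Matrix n m ℝ) (Y : Matrix p m ℝ) (A : Matrix p n ℝ) : ℝ :=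
  (1 / 2) * ∑ a, ∑ b, ((A * X - Y) a b) ^ 2

lemma convexOn_squareLoss (X : Matrix n m ℝ) (Y : Matrix p m ℝ) :
    ConvexOn ℝ Set.univ (squareLoss X Y) := by
  have hentry (a : p) (b : m) :
      ConvexOn ℝ Set.univ (fun A : Matrix p n ℝ => ((A * X - Y) a b) ^ 2) :=
    even_two.convexOn_pow.comp_affineMap
      ((entryLinearMap ℝ ℝ a b ∘ₗ mulRightLinearMap p ℝ X).toAffineMap -
        AffineMap.const ℝ _ (Y a b))
  exact (convexOn_finset_sum convex_univ fun a _ =>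
    convexOn_finset_sum convex_univ fun b _ => hentry a b).smul (by norm_num : (0 : ℝ) ≤ 1 / 2)

lemma differentiable_squareLoss (X : Matrix n m ℝ) (Y : Matrix p m ℝ) :
    Differentiable ℝ (squareLoss X Y) := by
  have hentry (a : p) (b : m) : Differentiable ℝ (fun A : Matrix p n ℝ => (A * X) a b) :=
    (LinearMap.toContinuousLinearMap
      (entryLinearMap ℝ ℝ a b ∘ₗ mulRightLinearMap p ℝ X)).differentiable
  exact (Differentiable.fun_sum fun a _ => Differentiable.fun_sum fun b _ =>
    ((hentry a b).sub_const (Y a b)).pow 2).const_mul (1 / 2)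

end SquareLoss

section Network

variable {H : ℕ} {d : Fin (H + 2) → ℕ}

/-- The tuple `(W_1, …, W_{H+1})` of weight matrices of a network with layer widths `d`; the matrix
`W_{i+1}` has index `i`. -/
abbrev NetWeights (d : Fin (H + 2) → ℕ) : Type :=
  ∀ i : Fin (H + 1), Matrix (Fin (d i.succ)) (Fin (d i.castSucc)) ℝ

/-- The chained product `W_{H+1} ⋯ W_{j+1}` of the layers that `netProdUpTo W j` leaves out. -/
noncomputable def netProdFrom (W : NetWeights d) (j : Fin (H + 2)) :
    Matrix (Fin (d (Fin.last (H + 1)))) (Fin (d j)) ℝ :=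
  Fin.reverseInduction (motive := fun j => Matrix (Fin (d (Fin.last (H + 1)))) (Fin (d j)) ℝ)
    1 (fun i acc => acc * W i) j

variable (W : NetWeights d)

lemma netProdUpTo_zero : netProdUpTo W 0 = 1 := rfl

lemma netProdUpTo_succ (i : Fin (H + 1)) :
    netProdUpTo W i.succ = W i * netProdUpTo W i.castSucc := by
  simp [netProdUpTo]

lemma netProdFrom_last : netProdFrom W (Fin.last (H + 1)) = 1 := by
  simp [netProdFrom]

lemma netProdFrom_castSucc (i : Fin (H + 1)) :
    netProdFrom W i.castSucc = netProdFrom W i.succ * W i := by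
  simp [netProdFrom]

lemma netProdFrom_mul_netProdUpTo (j : Fin (H + 2)) :
    netProdFrom W j * netProdUpTo W j = netProd W := by
  induction j using Fin.reverseInduction with
  | last => rw [netProdFrom_last, Matrix.one_mul, netProd]
  | cast i ih => rw [← ih, netProdUpTo_succ, netProdFrom_castSucc, Matrix.mul_assoc]

section Update

variable (i : Fin (H + 1)) (M : Matrix (Fin (d i.succ)) (Fin (d i.castSucc)) ℝ)

lemma netProdUpTo_update_of_le {j : Fin (H + 2)} (hj : j ≤ i.castSucc) :
    netProdUpTo (Function.update W i M) j = netProdUpTo W j := by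
  induction j using Fin.induction with
  | zero => rfl
  | succ k ih =>
    have hk : k < i := Fin.succ_le_castSucc_iff.mp hj
    rw [netProdUpTo_succ, netProdUpTo_succ, ih (Fin.castSucc_le_castSucc_iff.mpr hk.le),
      Function.update_of_ne hk.ne]

lemma netProdFrom_update_of_le {j : Fin (H + 2)} (hj : i.succ ≤ j) :
    netProdFrom (Function.update W i M) j = netProdFrom W j := by
  induction j using Fin.reverseInduction with
  | last => rw [netProdFrom_last, netProdFrom_last]
  | cast k ih =>
    have hk : i < k := Fin.succ_le_castSucc_iff.mp hj
    rw [netProdFrom_castSucc, netProdFrom_castSucc, ih (Fin.succ_le_succ_iff.mpr hk.le),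
      Function.update_of_ne hk.ne']

lemma netProdUpTo_succ_update_add :
    netProdUpTo (Function.update W i (W i + M)) i.succ =
      netProdUpTo W i.succ + M * netProdUpTo W i.castSucc := by
  rw [netProdUpTo_succ, netProdUpTo_update_of_le W i _ le_rfl, Function.update_self,
    Matrix.add_mul, ← netProdUpTo_succ]

lemma netProdFrom_castSucc_update_add :
    netProdFrom (Function.update W i (W i + M)) i.castSucc =
      netProdFrom W i.castSucc + netProdFrom W i.succ * M := by
  rw [netProdFrom_castSucc, netProdFrom_update_of_le W i _ le_rfl, Function.update_self,
    Matrix.mul_add, ← netProdFrom_castSucc]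

lemma netProd_update_add :
    netProd (Function.update W i (W i + M)) =
      netProd W + netProdFrom W i.succ * M * netProdUpTo W i.castSucc := by
  rw [← netProdFrom_mul_netProdUpTo _ i.castSucc, netProdFrom_castSucc_update_add,
    netProdUpTo_update_of_le W i _ le_rfl, Matrix.add_mul, netProdFrom_mul_netProdUpTo]

lemma continuous_update_add_smul :
    Continuous (fun t : ℝ => Function.update W i (W i + t • M)) :=
  continuous_const.update i (continuous_const.add (continuous_id.smul continuous_const))

end Update

variable {W} {f : Matrix (Fin (d (Fin.last (H + 1)))) (Fin (d 0)) ℝ → ℝ}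
  {K : Matrix (Fin (d 0)) (Fin (d (Fin.last (H + 1)))) ℝ}

lemma netProdUpTo_mul_gradient_mul_netProdFrom_eq_zero (hf : HasTraceGradientAt f K (netProd W))
    (hmin : IsLocalMin (f ∘ netProd) W) (i : Fin (H + 1)) :
    netProdUpTo W i.castSucc * K * netProdFrom W i.succ = 0 := by
  set P := netProdUpTo W i.castSucc
  set S := netProdFrom W i.succ
  refine ext_iff_trace_mul_right.mpr fun M => ?_
  let γ (t : ℝ) := Function.update W i (W i + t • M)
  have hγ_zero : γ 0 = W := by simp [γ]
  have hmin_line : IsLocalMin ((f ∘ netProd) ∘ γ) 0 :=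
    (hγ_zero.symm ▸ hmin).comp_continuous (continuous_update_add_smul W i M).continuousAt
  have hline : (f ∘ netProd) ∘ γ = fun t => f (netProd W + t • (S * M * P)) := by
    funext t
    simp only [γ, S, P, Function.comp_apply, netProd_update_add, Matrix.mul_smul, Matrix.smul_mul]
  have htrace : (K * (S * M * P)).trace = 0 := by
    rw [hline] at hmin_line
    exact hmin_line.hasDerivAt_eq_zero (hasDerivAt_line_of_hasTraceGradientAt hf _)
  rw [Matrix.zero_mul, trace_zero, ← htrace, ← Matrix.mul_assoc K, trace_mul_comm _ P]
  simp only [Matrix.mul_assoc]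

lemma exists_ne_zero_isLocalMin_update (hmin : IsLocalMin (f ∘ netProd) W) {i : Fin (H + 1)}
    {M : Matrix (Fin (d i.succ)) (Fin (d i.castSucc)) ℝ}
    (hM : netProdFrom W i.succ * M * netProdUpTo W i.castSucc = 0) :
    ∃ t : ℝ, t ≠ 0 ∧ IsLocalMin (f ∘ netProd) (Function.update W i (W i + t • M)) ∧
      netProd (Function.update W i (W i + t • M)) = netProd W := by
  have hprod (t : ℝ) : netProd (Function.update W i (W i + t • M)) = netProd W := by
    rw [netProd_update_add, Matrix.mul_smul, Matrix.smul_mul, hM, smul_zero, add_zero]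
  obtain ⟨t, ht, hmin_t⟩ := exists_ne_isLocalMin_of_comp_eq_const (a := (0 : ℝ))
    (continuous_update_add_smul W i M).continuousAt (F := f ∘ netProd) (by simpa using hmin)
    (fun t => by simp only [Function.comp_apply, hprod])
  exact ⟨t, ht, hmin_t, hprod t⟩

lemma gradient_mul_netProdFrom_succ_eq_zero_of_vecMul_eq_zero {i : Fin (H + 1)}
    (hf : HasTraceGradientAt f K (netProd W)) (hmin : IsLocalMin (f ∘ netProd) W)
    (hcastSucc : ∀ V : NetWeights d, HasTraceGradientAt f K (netProd V) →
      IsLocalMin (f ∘ netProd) V → K * netProdFrom V i.castSucc = 0)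
    {u : Fin (d i.castSucc) → ℝ} (hu : u ≠ 0) (huP : u ᵥ* netProdUpTo W i.castSucc = 0) :
    K * netProdFrom W i.succ = 0 := by
  refine eq_zero_of_forall_mul_vecMulVec_eq_zero hu fun v => ?_
  have hv_zero : vecMulVec v (0 : Fin (d 0) → ℝ) = 0 := (vecMulVecBilin ℝ ℝ v).map_zero
  obtain ⟨t, ht, hmin_t, hprod⟩ := exists_ne_zero_isLocalMin_update (M := vecMulVec v u) hmin
    (by rw [Matrix.mul_assoc, vecMulVec_mul, huP, hv_zero, Matrix.mul_zero])
  have hpert := hcastSucc _ (hprod ▸ hf) hmin_t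
  rwa [netProdFrom_castSucc_update_add, Matrix.mul_add, hcastSucc W hf hmin, zero_add,
    Matrix.mul_smul, Matrix.mul_smul, smul_eq_zero_iff_right ht, ← Matrix.mul_assoc] at hpert

lemma netProdUpTo_castSucc_mul_gradient_eq_zero_of_mulVec_eq_zero {i : Fin (H + 1)}
    (hf : HasTraceGradientAt f K (netProd W)) (hmin : IsLocalMin (f ∘ netProd) W)
    (hsucc : ∀ V : NetWeights d, HasTraceGradientAt f K (netProd V) →
      IsLocalMin (f ∘ netProd) V → netProdUpTo V i.succ * K = 0)
    {u : Fin (d i.succ) → ℝ} (hu : u ≠ 0) (hSu : netProdFrom W i.succ *ᵥ u = 0) :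
    netProdUpTo W i.castSucc * K = 0 := by
  refine eq_zero_of_forall_vecMulVec_mul_eq_zero hu fun v => ?_
  obtain ⟨t, ht, hmin_t, hprod⟩ := exists_ne_zero_isLocalMin_update (M := vecMulVec u v) hmin
    (by rw [mul_vecMulVec, hSu, zero_vecMulVec, Matrix.zero_mul])
  have hpert := hsucc _ (hprod ▸ hf) hmin_t
  rwa [netProdUpTo_succ_update_add, Matrix.add_mul, hsucc W hf hmin, zero_add,
    Matrix.smul_mul, Matrix.smul_mul, smul_eq_zero_iff_right ht, Matrix.mul_assoc] at hpert

lemma gradient_mul_netProdFrom_succ_eq_zero (hd : ∀ j, d 0 ≤ d j)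
    (hf : HasTraceGradientAt f K (netProd W)) (hmin : IsLocalMin (f ∘ netProd) W)
    (i : Fin (H + 1)) : K * netProdFrom W i.succ = 0 := by
  have hcrit := netProdUpTo_mul_gradient_mul_netProdFrom_eq_zero hf hmin i
  induction i using Fin.induction generalizing W with
  | zero => rwa [Fin.castSucc_zero, netProdUpTo_zero, Matrix.one_mul] at hcrit
  | succ k ih =>
    obtain ⟨B, hB⟩ | ⟨u, hu, huP⟩ := exists_mul_eq_one_or_exists_vecMul_eq_zero
      (by simpa using hd _) (netProdUpTo W k.succ.castSucc)
    · rw [← Matrix.one_mul K, ← hB, Matrix.mul_assoc B, Matrix.mul_assoc B, hcrit, Matrix.mul_zero]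
    · exact gradient_mul_netProdFrom_succ_eq_zero_of_vecMul_eq_zero hf hmin
        (fun V hfV hminV => ih hfV hminV
          (netProdUpTo_mul_gradient_mul_netProdFrom_eq_zero hfV hminV _)) hu huP

lemma netProdUpTo_castSucc_mul_gradient_eq_zero (hd : ∀ j, d (Fin.last (H + 1)) ≤ d j)
    (hf : HasTraceGradientAt f K (netProd W)) (hmin : IsLocalMin (f ∘ netProd) W)
    (i : Fin (H + 1)) : netProdUpTo W i.castSucc * K = 0 := by
  have hcrit := netProdUpTo_mul_gradient_mul_netProdFrom_eq_zero hf hmin i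
  induction i using Fin.reverseInduction generalizing W with
  | last => rwa [Fin.succ_last, netProdFrom_last, Matrix.mul_one] at hcrit
  | cast k ih =>
    obtain ⟨B, hB⟩ | ⟨u, hu, hSu⟩ := exists_mul_eq_one_or_exists_mulVec_eq_zero
      (by simpa using hd _) (netProdFrom W k.castSucc.succ)
    · rw [← Matrix.mul_one K, ← hB, ← Matrix.mul_assoc, ← Matrix.mul_assoc, hcrit, Matrix.zero_mul]
    · exact netProdUpTo_castSucc_mul_gradient_eq_zero_of_mulVec_eq_zero hf hmin
        (fun V hfV hminV => ih hfV hminV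
          (netProdUpTo_mul_gradient_mul_netProdFrom_eq_zero hfV hminV _)) hu hSu

theorem hasFDerivAt_zero_of_isLocalMin_comp_netProd
    (hwidth : ∀ j, min (d 0) (d (Fin.last (H + 1))) ≤ d j)
    (hf : DifferentiableAt ℝ f (netProd W)) (hmin : IsLocalMin (f ∘ netProd) W) :
    HasFDerivAt f (0 : Matrix _ _ ℝ →L[ℝ] ℝ) (netProd W) := by
  obtain ⟨K, hK⟩ := exists_hasTraceGradientAt hf
  suffices hK_zero : K = 0 from hasTraceGradientAt_zero_iff.mp (hK_zero ▸ hK)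
  rcases le_total (d 0) (d (Fin.last (H + 1))) with h | h
  · have hlast :=
      gradient_mul_netProdFrom_succ_eq_zero (min_eq_left h ▸ hwidth) hK hmin (Fin.last H)
    rwa [Fin.succ_last, netProdFrom_last, Matrix.mul_one] at hlast
  · have hfirst := netProdUpTo_castSucc_mul_gradient_eq_zero (min_eq_right h ▸ hwidth) hK hmin 0
    rwa [Fin.castSucc_zero, netProdUpTo_zero, Matrix.one_mul] at hfirst

theorem local_min_is_global_min_general
    (hwidth : ∀ j, min (d 0) (d (Fin.last (H + 1))) ≤ d j) (hconv : ConvexOn ℝ Set.univ f)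
    (hf : DifferentiableAt ℝ f (netProd W)) (hmin : IsLocalMin (f ∘ netProd) W)
    (A : Matrix (Fin (d (Fin.last (H + 1)))) (Fin (d 0)) ℝ) : f (netProd W) ≤ f A :=
  isMinOn_univ_of_convexOn_of_hasFDerivAt_zero hconv
    (hasFDerivAt_zero_of_isLocalMin_comp_netProd hwidth hf hmin) (Set.mem_univ A)

end Network

theorem local_min_is_global_min
    (H m : ℕ) (hH : 1 ≤ H) (d : Fin (H + 2) → ℕ) (hd : ∀ j, 0 < d j)
    (X : Matrix (Fin (d 0)) (Fin m) ℝ)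
    (Y : Matrix (Fin (d (Fin.last (H + 1)))) (Fin m) ℝ)
    (hwidth : Finset.univ.inf' Finset.univ_nonempty d
      = min (d 0) (d (Fin.last (H + 1))))
    (W : ∀ i : Fin (H + 1), Matrix (Fin (d i.succ)) (Fin (d i.castSucc)) ℝ)
    (hmin : IsLocalMin (netLoss X Y) W) :
    ∀ V : ∀ i : Fin (H + 1), Matrix (Fin (d i.succ)) (Fin (d i.castSucc)) ℝ,
      netLoss X Y W ≤ netLoss X Y V := by
  exact fun V => local_min_is_global_min_general
    (fun j => hwidth ▸ Finset.inf'_le d (Finset.mem_univ j)) (convexOn_squareLoss X Y)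
    (differentiable_squareLoss X Y _) hmin (netProd V)
end

section
/- Let i ≠ j and suppose w_i = 0 and w_j = 0 (so w lies on the saddle component indexed by {i, j}). Then every entry of the Hessian matrix of l at w is zero except the (i, j) and (j, i) entries, which both equal c := −x y ∏_{k ≠ i, j} w_k. Consequently the eigenvalues of the Hessian of l at w are c, −c, and 0 with multiplicity n − 2; equivalently, its characteristic polynomial is λ^{n−2}(λ² − c²). -/
/-- The width-one linear network loss `l(w) = ½(y − (∏ₖ wₖ) x)²`. -/
noncomputable def wLoss (n : ℕ) (x y : ℝ) (w : Fin n → ℝ) : ℝ :=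
  (1 / 2) * (y - (∏ k, w k) * x) ^ 2

/-- The partial derivative of `f` with respect to the `i`-th coordinate, at `w`. -/
noncomputable def pderivAt {n : ℕ} (i : Fin n) (f : (Fin n → ℝ) → ℝ)
    (w : Fin n → ℝ) : ℝ :=
  deriv (fun t => f (Function.update w i t)) (w i)

/-- The Hessian matrix of the width-one loss at `w`. -/
noncomputable def wHess (n : ℕ) (x y : ℝ) (w : Fin n → ℝ) : Matrix (Fin n) (Fin n) ℝ :=
  Matrix.of fun a b => pderivAt b (pderivAt a (wLoss n x y)) w

/-!
On the saddle component every product over all indices but one vanishes, so the outer-product part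
of the Hessian drops out and only the mixed partial derivatives of `∏ k, w k` survive. Such a
derivative omits two factors, hence is nonzero only if it omits exactly the two vanishing ones.
The resulting matrix `c Eᵢⱼ + c Eⱼᵢ` has rank at most two and factors through `ℝ²`; exchanging the
factors turns its characteristic polynomial into that of a `2 × 2` matrix.
-/

open Finset Polynomial

section Matrix

lemma single_add_single_apply_of_ne {m n R : Type*} [DecidableEq m] [DecidableEq n]
    [AddZeroClass R] {i k a : m} {j l b : n} (hij : ¬(a = i ∧ b = j)) (hkl : ¬(a = k ∧ b = l))
    (c d : R) : (Matrix.single i j c + Matrix.single k l d) a b = 0 := by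
  rw [Matrix.add_apply, Matrix.single_apply_of_ne _ _ _ _ _ (by tauto),
    Matrix.single_apply_of_ne _ _ _ _ _ (by tauto), add_zero]

variable {m R : Type*} [Fintype m] [DecidableEq m] [CommRing R]

lemma charpoly_single_add_single_fin_two (c d : R) :
    (Matrix.single 0 1 c + Matrix.single 1 0 d : Matrix (Fin 2) (Fin 2) R).charpoly =
      X ^ 2 - C (c * d) := by
  simp [Matrix.charpoly, Matrix.det_fin_two, sq]

lemma charpoly_single_add_single {i j : m} (hij : i ≠ j) (c d : R) :
    (Matrix.single i j c + Matrix.single j i d).charpoly =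
      X ^ (Fintype.card m - 2) * (X ^ 2 - C (c * d)) := by
  let U : Matrix m (Fin 2) R := Matrix.single i 0 1 + Matrix.single j 1 1
  let V : Matrix (Fin 2) m R := Matrix.single 0 j c + Matrix.single 1 i d
  have hUV : U * V = Matrix.single i j c + Matrix.single j i d := by
    simp [U, V, Matrix.mul_add, Matrix.add_mul]
  have hVU : V * U = Matrix.single 0 1 c + Matrix.single 1 0 d := by
    simp [U, V, Matrix.mul_add, Matrix.add_mul, hij, hij.symm, add_comm]
  have hcard : Fintype.card (Fin 2) ≤ Fintype.card m :=
    (Fintype.card_fin 2).trans_le (Fintype.one_lt_card_iff.2 ⟨i, j, hij⟩)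
  rw [← hUV, Matrix.charpoly_mul_comm_of_le U V hcard, hVU, Fintype.card_fin,
    charpoly_single_add_single_fin_two]

end Matrix

section Product

variable {ι R : Type*} [DecidableEq ι] [CommMonoidWithZero R] {f : ι → R} {i j : ι}

lemma prod_erase_eq_zero_of_two_zeros {s : Finset ι} (hi : i ∈ s) (hj : j ∈ s) (hij : i ≠ j)
    (hfi : f i = 0) (hfj : f j = 0) (a : ι) : ∏ k ∈ s.erase a, f k = 0 := by
  rcases eq_or_ne i a with rfl | hia
  · exact prod_eq_zero (mem_erase.2 ⟨hij.symm, hj⟩) hfj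
  · exact prod_eq_zero (mem_erase.2 ⟨hia, hi⟩) hfi

lemma prod_erase_erase_eq_zero_of_two_zeros {s : Finset ι} (hi : i ∈ s) (hj : j ∈ s)
    (hij : i ≠ j) (hfi : f i = 0) (hfj : f j = 0) {a b : ι} (hab : ¬(a = i ∧ b = j))
    (hba : ¬(a = j ∧ b = i)) : ∏ k ∈ (s.erase a).erase b, f k = 0 := by
  obtain h | h : i ∈ (s.erase a).erase b ∨ j ∈ (s.erase a).erase b := by grind
  · exact prod_eq_zero h hfi
  · exact prod_eq_zero h hfj

end Product

lemma hasDerivAt_prod_update {ι 𝕜 : Type*} [DecidableEq ι] [NontriviallyNormedField 𝕜]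
    (s : Finset ι) (w : ι → 𝕜) (i : ι) (t : 𝕜) :
    HasDerivAt (fun t ↦ ∏ k ∈ s, Function.update w i t k)
      (if i ∈ s then ∏ k ∈ s.erase i, w k else 0) t := by
  split_ifs with hi
  · simpa [prod_update_of_mem hi, sdiff_singleton_eq_erase] using
      (hasDerivAt_id t).mul_const (∏ k ∈ s.erase i, w k)
  · simpa [prod_update_of_notMem hi] using hasDerivAt_const t (∏ k ∈ s, w k)

section Loss

variable {n : ℕ} (x y : ℝ) (w : Fin n → ℝ)

lemma pderivAt_wLoss (a : Fin n) :
    pderivAt a (wLoss n x y) w =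
      -(x * ∏ k ∈ univ.erase a, w k) * (y - (∏ k, w k) * x) := by
  have hresidual := ((hasDerivAt_prod_update univ w a (w a)).mul_const x).const_sub y
  have hloss := (hresidual.pow 2).const_mul (1 / 2 : ℝ)
  refine hloss.deriv.trans ?_
  simp only [Function.update_eq_self, mem_univ, if_true]
  ring

lemma wHess_apply (a b : Fin n) :
    wHess n x y w a b =
      x ^ 2 * (∏ k ∈ univ.erase a, w k) * (∏ k ∈ univ.erase b, w k) -
        x * (y - (∏ k, w k) * x) *
          if b ∈ univ.erase a then ∏ k ∈ (univ.erase a).erase b, w k else 0 := by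
  have hgrad := funext fun v ↦ pderivAt_wLoss x y v a
  have hresidual := ((hasDerivAt_prod_update univ w b (w b)).mul_const x).const_sub y
  have hpartial := ((hasDerivAt_prod_update (univ.erase a) w b (w b)).const_mul x).neg
  rw [wHess, Matrix.of_apply, hgrad]
  refine (hpartial.mul hresidual).deriv.trans ?_
  simp only [Function.update_eq_self, mem_univ, if_true, Pi.neg_apply]
  ring

variable {w} {i j : Fin n}

lemma wHess_apply_of_two_zeros (hij : i ≠ j) (hwi : w i = 0) (hwj : w j = 0) (a b : Fin n) :
    wHess n x y w a b =
      -(x * y) * if b ∈ univ.erase a then ∏ k ∈ (univ.erase a).erase b, w k else 0 := by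
  have hprod : ∏ k, w k = 0 := prod_eq_zero (mem_univ i) hwi
  have hprod_erase := prod_erase_eq_zero_of_two_zeros (mem_univ i) (mem_univ j) hij hwi hwj a
  rw [wHess_apply, hprod, hprod_erase]
  ring

lemma wHess_eq_single_add_single (hij : i ≠ j) (hwi : w i = 0) (hwj : w j = 0) :
    wHess n x y w =
      Matrix.single i j (-(x * y) * ∏ k ∈ (univ.erase i).erase j, w k) +
        Matrix.single j i (-(x * y) * ∏ k ∈ (univ.erase i).erase j, w k) := by
  ext a b
  rw [wHess_apply_of_two_zeros x y hij hwi hwj]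
  by_cases hab : a = i ∧ b = j
  · obtain ⟨rfl, rfl⟩ := hab
    simp [hij, hij.symm]
  by_cases hba : a = j ∧ b = i
  · obtain ⟨rfl, rfl⟩ := hba
    simp [hij, hij.symm, erase_right_comm (a := a)]
  · have hzero := prod_erase_erase_eq_zero_of_two_zeros (mem_univ i) (mem_univ j) hij hwi hwj
      hab hba
    rw [hzero, ite_self, mul_zero, single_add_single_apply_of_ne hab hba]

end Loss

theorem width_one_hessian_on_saddle_component
    (n : ℕ) (hn : 2 ≤ n) (x y : ℝ) (w : Fin n → ℝ) (i j : Fin n) (hij : i ≠ j)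
    (hwi : w i = 0) (hwj : w j = 0) :
    (∀ a b : Fin n, ¬(a = i ∧ b = j) → ¬(a = j ∧ b = i) → wHess n x y w a b = 0) ∧
    wHess n x y w i j = -(x * y) * ∏ k ∈ (Finset.univ.erase i).erase j, w k ∧
    wHess n x y w j i = -(x * y) * ∏ k ∈ (Finset.univ.erase i).erase j, w k ∧
    (wHess n x y w).charpoly
      = Polynomial.X ^ (n - 2)
        * (Polynomial.X ^ 2
            - Polynomial.C ((-(x * y) * ∏ k ∈ (Finset.univ.erase i).erase j, w k) ^ 2)) := by
  have hH := wHess_eq_single_add_single x y hij hwi hwj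
  refine ⟨fun a b hab hba ↦ ?_, ?_, ?_, ?_⟩
  · rw [hH, single_add_single_apply_of_ne hab hba]
  · simp [hH, hij.symm]
  · simp [hH, hij]
  · rw [hH, charpoly_single_add_single hij, Fintype.card_fin, ← sq]
end
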